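/- In the N-player (n,m)-Bingo game with fixed cards c_1,…,c_N, the expected number of calls until some player achieves Bingo equals E[B_N] = (m·n + 1)·(1 − S_{n,N}), where S_{n,N} = Σ_{∅ ≠ Y ⊆ 𝓛_N} (−1)^{|Y|+1} / (m(Y)+1). -/

import Mathlib

/-!
Add a divider `none` to the `M` numbers. A calling order together with a number of calls `k ≤ M` is
the same as an ordering of these `M + 1` items, with the divider inserted after the first `k` calls.
All of `U` is called within those `k` calls exactly when the divider comes last among
`U ∪ {none}`, which by symmetry happens for a fraction `1 / (|U| + 1)` of the `(M + 1)!` orderings.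
The sum of the waiting times is the number of pairs (order, `k`) for which no winning set is
complete after `k` calls, so inclusion-exclusion over the winning sets, where the events of a family
`Y` intersect in the event of the union of `Y`, gives the formula.
-/

open Finset

/-- The row of an `n × n` Bingo board through index `i`. -/
def bingoRow (n : ℕ) (i : Fin n) : Finset (Fin n × Fin n) :=
  Finset.univ.filter (fun s => s.1 = i)

/-- The column of an `n × n` Bingo board through index `j`. -/
def bingoCol (n : ℕ) (j : Fin n) : Finset (Fin n × Fin n) :=
  Finset.univ.filter (fun s => s.2 = j)

/-- The main diagonal `{(i,i)}`. -/
def bingoDiag (n : ℕ) : Finset (Fin n × Fin n) :=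
  Finset.univ.filter (fun s => (s.2 : ℕ) = (s.1 : ℕ))

/-- The anti-diagonal `{(i, n-1-i)}`. -/
def bingoAntiDiag (n : ℕ) : Finset (Fin n × Fin n) :=
  Finset.univ.filter (fun s => (s.2 : ℕ) = n - 1 - (s.1 : ℕ))

/-- The set `𝓛` of winning lines: `n` rows, `n` columns and the two diagonals. -/
def bingoLines (n : ℕ) : Finset (Finset (Fin n × Fin n)) :=
  (Finset.univ.image (bingoRow n)) ∪ (Finset.univ.image (bingoCol n)) ∪
    {bingoDiag n, bingoAntiDiag n}

/-- An `(n,m)`-Bingo card: an injective assignment of numbers such that column `j`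
only uses numbers in `[m*j, m*(j+1))`. -/
def IsBingoCard (n m : ℕ) (c : Fin n × Fin n → Fin (m * n)) : Prop :=
  Function.Injective c ∧
    ∀ i j : Fin n, m * (j : ℕ) ≤ (c (i, j) : ℕ) ∧ (c (i, j) : ℕ) < m * ((j : ℕ) + 1)

/-- Bingo is achieved within the first `k` calls of `σ`: some winning line has all of its
numbers among `σ 0, …, σ (k-1)`. -/
def BingoWins (n m : ℕ) (c : Fin n × Fin n → Fin (m * n))
    (σ : Equiv.Perm (Fin (m * n))) (k : ℕ) : Prop :=
  ∃ L ∈ bingoLines n, ∀ s ∈ L, ∃ t : Fin (m * n), (t : ℕ) < k ∧ σ t = c s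

/-- `S_n = ∑_{∅ ≠ X ⊆ 𝓛} (-1)^{|X|+1} / (m(X)+1)`, where `m(X)` is the number of squares
covered by the union of the lines in `X`. -/
noncomputable def Sn (n : ℕ) : ℝ :=
  ∑ X ∈ (bingoLines n).powerset.filter (fun X => X.Nonempty),
    (-1 : ℝ) ^ (X.card + 1) / (((X.sup id).card : ℝ) + 1)

/-- The set `𝓛_N` of distinct number-sets of winning lines across the `N` cards. -/
def bingoLinesN (n m N : ℕ) (c : Fin N → Fin n × Fin n → Fin (m * n)) :
    Finset (Finset (Fin (m * n))) :=
  ((Finset.univ : Finset (Fin N)) ×ˢ bingoLines n).image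
    (fun q => q.2.image (c q.1))

/-- Some number-set in `𝓛_N` is contained among the first `k` calls of `σ`. -/
def BingoWinsN (n m N : ℕ) (c : Fin N → Fin n × Fin n → Fin (m * n))
    (σ : Equiv.Perm (Fin (m * n))) (k : ℕ) : Prop :=
  ∃ A ∈ bingoLinesN n m N c, ∀ x ∈ A, ∃ t : Fin (m * n), (t : ℕ) < k ∧ σ t = x

/-- `S_{n,N}` for a fixed realization of the `N` cards. -/
noncomputable def SnN (n m N : ℕ) (c : Fin N → Fin n × Fin n → Fin (m * n)) : ℝ :=
  ∑ Y ∈ (bingoLinesN n m N c).powerset.filter (fun Y => Y.Nonempty),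
    (-1 : ℝ) ^ (Y.card + 1) / (((Y.sup id).card : ℝ) + 1)

section Ordering

variable {ι α : Type*} [Fintype ι] [LinearOrder ι] [Fintype α] [DecidableEq α]

lemma sum_card_filter_forall_symm_le {V : Finset α} (hV : V.Nonempty) :
    ∑ y ∈ V, #{σ : ι ≃ α | ∀ v ∈ V, σ.symm v ≤ σ.symm y} = Fintype.card (ι ≃ α) := by
  rw [← card_biUnion, ← card_univ]
  · congr 1
    refine eq_univ_of_forall fun σ => ?_
    simpa using exists_max_image V σ.symm hV
  · refine fun y hy z hz hyz => disjoint_filter.2 fun σ _ hσy hσz => hyz ?_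
    exact σ.symm.injective ((hσz y hy).antisymm (hσy z hz))

lemma card_filter_forall_symm_le_congr {V : Finset α} {x y : α} (hx : x ∈ V) (hy : y ∈ V) :
    #{σ : ι ≃ α | ∀ v ∈ V, σ.symm v ≤ σ.symm x} =
      #{σ : ι ≃ α | ∀ v ∈ V, σ.symm v ≤ σ.symm y} := by
  have hswap : ∀ v, Equiv.swap x y v ∈ V ↔ v ∈ V := by
    intro v
    rw [Equiv.swap_apply_def]
    split_ifs <;> simp_all
  refine card_equiv ((Equiv.refl ι).equivCongr (Equiv.swap x y)) fun σ => ?_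
  have hσ : (∀ v ∈ V, σ.symm (Equiv.swap x y v) ≤ σ.symm x) ↔ ∀ v ∈ V, σ.symm v ≤ σ.symm x :=
    (Equiv.swap x y).forall_congr fun {v} => by rw [hswap]
  simpa using hσ.symm

lemma card_mul_card_filter_forall_symm_le {V : Finset α} {x : α} (hx : x ∈ V) :
    #V * #{σ : ι ≃ α | ∀ v ∈ V, σ.symm v ≤ σ.symm x} = Fintype.card (ι ≃ α) := by
  rw [← sum_card_filter_forall_symm_le ⟨x, hx⟩, ← smul_eq_mul]
  exact (sum_eq_card_nsmul fun y hy => card_filter_forall_symm_le_congr hy hx).symm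

end Ordering

section Divider

variable {α : Type*} {M : ℕ}

lemma optionCongr_removeNone_of_apply_none {β : Type*} {e : Option α ≃ Option β}
    (he : e none = none) : e.removeNone.optionCongr = e := by
  ext1 x
  cases x with
  | none => simp [he]
  | some x =>
    have hsome : e (some x) ≠ none := fun h => by simpa using e.injective (h.trans he.symm)
    simpa using e.removeNone_some (Option.ne_none_iff_exists'.1 hsome)

/-- A calling order of `α` together with a number of calls `k` is an order of `Option α`: the
divider `none` is inserted after the first `k` calls, hence at position `k`. -/
def insertDivider : ((Fin M ≃ α) × Fin (M + 1)) ≃ (Fin (M + 1) ≃ Option α) where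
  toFun p := (finSuccEquiv' p.2).trans p.1.optionCongr
  invFun τ := (((finSuccEquiv' (τ.symm none)).symm.trans τ).removeNone, τ.symm none)
  left_inv p := by
    have hnone : ((finSuccEquiv' p.2).trans p.1.optionCongr).symm none = p.2 := by
      simp [← Equiv.optionCongr_symm]
    simp only [hnone, ← Equiv.trans_assoc, Equiv.symm_trans_self, Equiv.refl_trans,
      Equiv.removeNone_optionCongr]
  right_inv τ := by
    have hnone : (finSuccEquiv' (τ.symm none)).symm.trans τ none = none := by simp
    simp only [optionCongr_removeNone_of_apply_none hnone, ← Equiv.trans_assoc,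
      Equiv.self_trans_symm, Equiv.refl_trans]

@[simp]
lemma insertDivider_symm_apply_none (p : (Fin M ≃ α) × Fin (M + 1)) :
    (insertDivider p).symm none = p.2 := by
  simp [insertDivider, ← Equiv.optionCongr_symm]

@[simp]
lemma insertDivider_symm_apply_some (p : (Fin M ≃ α) × Fin (M + 1)) (x : α) :
    (insertDivider p).symm (some x) = p.2.succAbove (p.1.symm x) := by
  simp [insertDivider, ← Equiv.optionCongr_symm]

variable [Fintype α] [DecidableEq α]

/-- The pairs `(σ, k)` of a calling order and a number of calls such that all of `U` is among the
first `k` calls. Both `k = 0` and `k = M` are allowed. -/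
def completedPairs (M : ℕ) (U : Finset α) : Finset ((Fin M ≃ α) × Fin (M + 1)) :=
  {p | ∀ x ∈ U, (p.1.symm x).castSucc < p.2}

lemma mem_completedPairs {U : Finset α} {p : (Fin M ≃ α) × Fin (M + 1)} :
    p ∈ completedPairs M U ↔ ∀ x ∈ U, (p.1.symm x).castSucc < p.2 := by
  simp [completedPairs]

lemma mem_completedPairs_iff_insertDivider {U : Finset α} {p : (Fin M ≃ α) × Fin (M + 1)} :
    p ∈ completedPairs M U ↔
      ∀ v ∈ insertNone U, (insertDivider p).symm v ≤ (insertDivider p).symm none := by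
  simp [mem_completedPairs, Option.forall, (Fin.succAbove_ne _ _).le_iff_lt,
    Fin.succAbove_lt_iff_castSucc_lt]

lemma succ_card_mul_card_completedPairs (U : Finset α) :
    (#U + 1) * #(completedPairs M U) = Fintype.card (Fin (M + 1) ≃ Option α) := by
  rw [← card_insertNone, ← card_mul_card_filter_forall_symm_le (none_mem_insertNone (s := U))]
  congr 1
  refine card_equiv insertDivider fun p => ?_
  rw [mem_completedPairs_iff_insertDivider, mem_filter_univ]

lemma inf_completedPairs (Y : Finset (Finset α)) :
    Y.inf (completedPairs M) = completedPairs M (Y.sup id) := by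
  ext p
  simp only [mem_inf, mem_completedPairs, mem_sup, id]
  grind

end Divider

section WaitingTime

variable {α : Type*} {M : ℕ}

lemma sum_powerset_neg_one_pow_mul {R : Type*} [Ring R] (F : Finset α) (f : Finset α → R) :
    ∑ Y ∈ F.powerset, (-1) ^ #Y * f Y =
      f ∅ - ∑ Y ∈ F.powerset with Y.Nonempty, (-1) ^ (#Y + 1) * f Y := by
  classical
  rw [← sum_filter_not_add_sum_filter _ (·.Nonempty)]
  simp [filter_eq', pow_succ, sub_eq_add_neg]

variable [Fintype α] [DecidableEq α] {F : Finset (Finset α)} {B : (Fin M ≃ α) → ℕ}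

lemma mem_inf_compl_completedPairs {b : ℕ} {p : (Fin M ≃ α) × Fin (M + 1)}
    (hb : IsLeast {k : ℕ | ∃ A ∈ F, ∀ x ∈ A, (p.1.symm x : ℕ) < k} b) :
    p ∈ F.inf (fun A => (completedPairs M A)ᶜ) ↔ (p.2 : ℕ) < b := by
  have hlt : (p.2 : ℕ) < b ↔ ¬ ∃ A ∈ F, ∀ x ∈ A, (p.1.symm x : ℕ) < p.2 := by
    rw [← not_le, not_iff_not]
    refine ⟨fun hbp => ?_, fun hp => hb.2 hp⟩
    obtain ⟨A, hA, hAb⟩ := hb.1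
    exact ⟨A, hA, fun x hx => (hAb x hx).trans_le hbp⟩
  simp [hlt, mem_inf, mem_completedPairs, Fin.lt_def]

lemma card_inf_compl_completedPairs
    (hB : ∀ σ, IsLeast {k : ℕ | ∃ A ∈ F, ∀ x ∈ A, (σ.symm x : ℕ) < k} (B σ)) :
    #(F.inf fun A => (completedPairs M A)ᶜ) = ∑ σ, B σ := by
  have hle (σ : Fin M ≃ α) : B σ ≤ M + 1 := by
    obtain ⟨A, hA, -⟩ := (hB σ).1
    exact (hB σ).2 ⟨A, hA, fun x _ => (σ.symm x).isLt.trans M.lt_succ_self⟩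
  have hfilter : (F.inf fun A => (completedPairs M A)ᶜ) =
      ({p | (p.2 : ℕ) < B p.1} : Finset ((Fin M ≃ α) × Fin (M + 1))) := by
    ext p
    rw [mem_inf_compl_completedPairs (hB p.1), mem_filter_univ]
  rw [hfilter, card_filter, Fintype.sum_prod_type]
  refine sum_congr rfl fun σ _ => ?_
  rw [← card_filter]
  exact Fin.card_filter_val_lt.trans (min_eq_right (hle σ))

lemma card_completedPairs (hα : Fintype.card α = M) (U : Finset α) :
    (#(completedPairs M U) : ℝ) = (M + 1).factorial / (#U + 1) := by
  have hcard : Fintype.card (Fin (M + 1) ≃ Option α) = (M + 1).factorial := by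
    rw [Fintype.card_equiv (Fintype.equivOfCardEq (by simp [hα])), Fintype.card_fin]
  rw [eq_div_iff (by positivity), mul_comm, ← hcard, ← succ_card_mul_card_completedPairs U]
  push_cast
  rfl

theorem bingo_multiplayer_expectation_general (hα : Fintype.card α = M)
    (hB : ∀ σ, IsLeast {k : ℕ | ∃ A ∈ F, ∀ x ∈ A, (σ.symm x : ℕ) < k} (B σ)) :
    (∑ σ, (B σ : ℝ)) / M.factorial =
      (M + 1) * (1 - ∑ Y ∈ F.powerset with Y.Nonempty,
        (-1) ^ (#Y + 1) / ((#(Y.sup id) : ℝ) + 1)) := by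
  have hsum : ∑ σ, (B σ : ℝ) =
      ∑ Y ∈ F.powerset, (-1) ^ #Y * (#(completedPairs M (Y.sup id)) : ℝ) := by
    simp_rw [← inf_completedPairs]
    exact_mod_cast card_inf_compl_completedPairs hB ▸
      inclusion_exclusion_card_inf_compl F (completedPairs M)
  have hcard : ∑ σ, (B σ : ℝ) =
      (M + 1).factorial * ∑ Y ∈ F.powerset, (-1) ^ #Y * ((#(Y.sup id) : ℝ) + 1)⁻¹ := by
    simp_rw [hsum, card_completedPairs hα, div_eq_mul_inv, mul_sum, mul_left_comm]
  have hfactorial : ((M + 1).factorial : ℝ) / M.factorial = M + 1 := by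
    rw [Nat.factorial_succ, Nat.cast_mul, mul_div_cancel_right₀ _ (by positivity), Nat.cast_succ]
  rw [hcard, mul_div_right_comm, hfactorial,
    sum_powerset_neg_one_pow_mul F fun Y => ((#(Y.sup id) : ℝ) + 1)⁻¹]
  simp [div_eq_mul_inv]

end WaitingTime

lemma nonempty_of_mem_bingoLines {n : ℕ} (hn : 1 ≤ n) {L : Finset (Fin n × Fin n)}
    (hL : L ∈ bingoLines n) : L.Nonempty := by
  simp only [bingoLines, mem_union, mem_image, mem_univ, true_and, mem_insert,
    mem_singleton] at hL
  rcases hL with (⟨i, rfl⟩ | ⟨j, rfl⟩) | rfl | rfl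
  · exact ⟨(i, i), by simp [bingoRow]⟩
  · exact ⟨(j, j), by simp [bingoCol]⟩
  · exact ⟨(⟨0, hn⟩, ⟨0, hn⟩), by simp [bingoDiag]⟩
  · exact ⟨(⟨0, hn⟩, ⟨n - 1, by lia⟩), by simp [bingoAntiDiag]⟩

section BingoLinesN

variable {n m N k : ℕ} {c : Fin N → Fin n × Fin n → Fin (m * n)}

lemma nonempty_of_mem_bingoLinesN (hn : 1 ≤ n) {A : Finset (Fin (m * n))}
    (hA : A ∈ bingoLinesN n m N c) : A.Nonempty := by
  simp only [bingoLinesN, mem_image, mem_product] at hA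
  obtain ⟨q, ⟨-, hq⟩, rfl⟩ := hA
  exact (nonempty_of_mem_bingoLines hn hq).image _

lemma one_le_of_bingoWinsN (hn : 1 ≤ n) {σ : Equiv.Perm (Fin (m * n))}
    (hk : BingoWinsN n m N c σ k) : 1 ≤ k := by
  obtain ⟨A, hA, hAk⟩ := hk
  obtain ⟨x, hx⟩ := nonempty_of_mem_bingoLinesN hn hA
  obtain ⟨t, ht, -⟩ := hAk x hx
  lia

lemma one_le_and_bingoWinsN_iff (hn : 1 ≤ n) {σ : Equiv.Perm (Fin (m * n))} :
    1 ≤ k ∧ BingoWinsN n m N c σ k ↔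
      ∃ A ∈ bingoLinesN n m N c, ∀ x ∈ A, (σ.symm x : ℕ) < k := by
  rw [and_iff_right_of_imp (one_le_of_bingoWinsN hn)]
  simp [BingoWinsN, ← Equiv.eq_symm_apply]

end BingoLinesN

/-- in the `N`-player `(n,m)`-Bingo game with fixed cards, the expected
number of calls until some player achieves Bingo is `(m·n + 1)·(1 - S_{n,N})`. -/
theorem bingo_multiplayer_expectation (n m N : ℕ) (hn : 1 ≤ n) (hm : n ≤ m) (hN : 1 ≤ N)
    (c : Fin N → Fin n × Fin n → Fin (m * n)) (hc : ∀ a, IsBingoCard n m (c a))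
    (B : Equiv.Perm (Fin (m * n)) → ℕ)
    (hB : ∀ σ, IsLeast {k : ℕ | 1 ≤ k ∧ BingoWinsN n m N c σ k} (B σ)) :
    (∑ σ : Equiv.Perm (Fin (m * n)), (B σ : ℝ)) / (Nat.factorial (m * n)) =
      ((m * n : ℕ) + 1) * (1 - SnN n m N c) := by
  refine bingo_multiplayer_expectation_general (Fintype.card_fin _) fun σ => ?_
  simpa only [one_le_and_bingoWinsN_iff hn] using hB σ
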